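/- Let I be a monomial ideal in S = K[x₁,…,xₙ]. Then for all integers i₁, i₂ ≥ 0 one has t_{i₁+i₂}(S/I) ≤ t_{i₁}(S/I) + t_{i₂}(S/I). -/

import Mathlib

open Finsupp

noncomputable section

variable (K : Type) [Field K]

section Core
variable (P : Type) [Preorder P]

/-- Order chains with `n` elements of the poset `P`, written as strictly
decreasing tuples `(x₀ > x₁ > ⋯ > x_{n-1})`. -/
def OChain (n : ℕ) : Type := {c : Fin n → P // StrictAnti c}

/-- The chain group in "level" `n`: the `K`-vector space with basis the order chains with
`n` elements.  Level `n` corresponds to homological degree `n - 1`; in particular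
`CGrp K P 0 ≅ K` is the reduced part `C̃₋₁`. -/
abbrev CGrp (n : ℕ) : Type := OChain P n →₀ K

/-- Deletion of the `k`-th entry of an order chain. -/
def odel {n : ℕ} (k : Fin (n + 1)) (c : OChain P (n + 1)) : OChain P n :=
  ⟨c.1 ∘ k.succAbove, c.2.comp_strictMono (Fin.strictMono_succAbove k)⟩

/-- The simplicial boundary map (of the reduced simplicial chain complex of the order
complex), from level `n+1` to level `n`. -/
def cbdry (n : ℕ) : CGrp K P (n + 1) →ₗ[K] CGrp K P n :=
  Finsupp.lsum K fun c => ∑ k : Fin (n + 1), ((-1 : K) ^ (k : ℕ)) • Finsupp.lsingle (odel P k c)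

/-- The cycles in level `n` (every level-0 chain, i.e. multiple of the empty chain,
is a cycle). -/
def cyclesAt : (n : ℕ) → Submodule K (CGrp K P n)
  | 0 => ⊤
  | (n + 1) => LinearMap.ker (cbdry K P n)

/-- The boundaries in level `n`. -/
def boundariesIn (n : ℕ) : Submodule K (CGrp K P n) :=
  LinearMap.range (cbdry K P n)

/-- `H̃_{n-1}(P) ≠ 0`: nontriviality of the reduced simplicial homology (with coefficients
in `K`) of the order complex of `P` in degree `n - 1` (level `n`). -/
def RHomNontrivial (n : ℕ) : Prop := ¬ cyclesAt K P n ≤ boundariesIn K P n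

end Core


section Monomial

variable (nv : ℕ)

/-- The polynomial ring `S = K[x₁, …, xₙ]`. -/
abbrev PolyS : Type := MvPolynomial (Fin nv) K

/-- The monomial `x^d` attached to an exponent vector `d`. -/
def monOf (d : Fin nv → ℕ) : PolyS K nv :=
  MvPolynomial.monomial (Finsupp.equivFunOnFinite.symm d) 1

/-- `I` is a monomial ideal: it is generated by monomials. -/
def IsMonomialIdeal (I : Ideal (PolyS K nv)) : Prop :=
  ∃ G : Set (Fin nv → ℕ), I = Ideal.span (monOf K nv '' G)

/-- The minimal monomial generating set `G(I)` of a monomial ideal: exponent vectors of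
the monomials of `I` that are minimal with respect to divisibility. -/
def minGens (I : Ideal (PolyS K nv)) : Set (Fin nv → ℕ) :=
  {d | monOf K nv d ∈ I ∧ ∀ d' < d, monOf K nv d' ∉ I}

/-- The underlying set of the LCM-lattice of a monomial ideal: all least common multiples
(= pointwise suprema of exponent vectors) of subsets of the minimal generators, ordered by
divisibility (= the pointwise order).  The empty subset contributes `lcm ∅ = 1`, i.e. the
zero exponent vector. -/
def lcmSet (I : Ideal (PolyS K nv)) : Set (Fin nv → ℕ) :=
  {m | ∃ B : Finset (Fin nv → ℕ), ↑B ⊆ minGens K nv I ∧ m = B.sup id}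

/-- The open interval `(1, m)` in the LCM-lattice of `I`. -/
def openInt (I : Ideal (PolyS K nv)) (m : Fin nv → ℕ) : Set (Fin nv → ℕ) :=
  {p | p ∈ lcmSet K nv I ∧ 0 < p ∧ p < m}

/-- Total degree of a monomial given by its exponent vector. -/
def degTot (m : Fin nv → ℕ) : ℕ := ∑ r, m r

open Classical in
/-- The multigraded Betti number `β_{i,m}(S/I) = dim_K Tor_i^S(S/I, K)_m` of a monomial
ideal, via the Gasharov–Peeva–Welker formula: for `i ≥ 1` and `m` in the LCM-lattice,
`β_{i,m}(S/I) = dim_K H̃_{i-2}((1, m))` (reduced homology of the order complex of the open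
interval in the LCM-lattice; degree `i-2` is level `i-1`; the dimension of the homology is
the dimension of the cycles minus the dimension of the boundaries); moreover `β_{0,m} = 1` iff
`m = 1`, and `β_{i,m} = 0` for `m` outside the LCM-lattice. -/
noncomputable def multiBetti (I : Ideal (PolyS K nv)) (i : ℕ) (m : Fin nv → ℕ) : ℕ :=
  if i = 0 then (if m = 0 then 1 else 0)
  else if m ∈ lcmSet K nv I ∧ m ≠ 0 then
    Module.finrank K ↥(cyclesAt K ↥(openInt K nv I m) (i - 1)) -
      Module.finrank K ↥(boundariesIn K ↥(openInt K nv I m) (i - 1))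
  else 0

/-- The graded Betti number `β_{i,j}(S/I) = dim_K Tor_i^S(S/I, K)_j`: the sum of the
multigraded Betti numbers over the multidegrees of total degree `j`. -/
noncomputable def betti (I : Ideal (PolyS K nv)) (i j : ℕ) : ℕ :=
  ∑ᶠ m ∈ {m : Fin nv → ℕ | degTot nv m = j}, multiBetti K nv I i m

/-- The maximal shift `t_i(S/I) = max { j : β_{i,j}(S/I) ≠ 0 }`, with `t_i(S/I) = 0`
if `β_{i,j}(S/I) = 0` for all `j` (the supremum over the empty set of naturals is `0`). -/
noncomputable def tshift (I : Ideal (PolyS K nv)) (i : ℕ) : ℕ :=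
  sSup {j | betti K nv I i j ≠ 0}

/-- `a_i(S/I)`: the number of multidegrees `m` with `β_{i,m}(S/I) ≠ 0`. -/
noncomputable def acount (I : Ideal (PolyS K nv)) (i : ℕ) : ℕ :=
  {m : Fin nv → ℕ | multiBetti K nv I i m ≠ 0}.ncard

end Monomial

/-!
The Betti number `β_{i,m}(S/I)` is the number of cells of dimension `i` and label `m` in a minimal
resolution whose cells are labeled by the LCM-lattice. Since any two labeled resolutions are
homotopy equivalent by maps that respect the labels, `β_{i,m}` is nonzero exactly when, in an
arbitrary one of them, the cells of label `< m` have homology in degree `i - 1`; the strictly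
decreasing chains in the LCM-lattice form such a resolution.

If `F` is minimal, then `b ↦ b ⊗ 1` and `b ↦ 1 ⊗ b` are homotopic maps `F → F ⊗ F`. Suppose that a
cell `b` of dimension `p + q` and label `m` exists, and cut the homotopy off at bidegree `(p, q)`:
were there no cells `c`, `c'` of dimensions `p`, `q` whose labels have join `m`, then the class of
`b` would be killed. Hence `m = lcm(x, y)` with `β_{p,x}` and `β_{q,y}` nonzero, and
`deg lcm(x, y) ≤ deg x + deg y`.
-/

section SupportedVectors

variable {R A B M : Type*}

section Semiring

variable [Semiring R] [AddCommMonoid M] [Module R M]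

theorem mem_supported_iff_forall_ne {S : Set A} {x : A →₀ R} :
    x ∈ supported R R S ↔ ∀ a, x a ≠ 0 → a ∈ S := by
  simp only [mem_supported, Set.subset_def, Finset.mem_coe, mem_support_iff]

theorem single_one_mem_supported {S : Set A} {a : A} (ha : a ∈ S) :
    single a (1 : R) ∈ supported R R S :=
  single_mem_supported R 1 ha

theorem mem_supported_of_subset {S T : Set A} {x : A →₀ R} (hx : x ∈ supported R R S)
    (hST : S ⊆ T) : x ∈ supported R R T :=
  supported_mono hST hx

theorem map_mem_of_mem_supported (φ : (A →₀ R) →ₗ[R] M) {p : Submodule R M} {S : Set A}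
    {x : A →₀ R} (hx : x ∈ supported R R S) (h : ∀ a ∈ S, φ (single a 1) ∈ p) : φ x ∈ p := by
  suffices supported R R S ≤ p.comap φ from this hx
  rw [supported_eq_span_single, Submodule.span_le]
  rintro _ ⟨a, ha, rfl⟩
  exact h a ha

theorem eq_of_mem_supported {φ ψ : (A →₀ R) →ₗ[R] M} {S : Set A} {x : A →₀ R}
    (hx : x ∈ supported R R S) (h : ∀ a ∈ S, φ (single a 1) = ψ (single a 1)) : φ x = ψ x := by
  rw [supported_eq_span_single] at hx
  refine LinearMap.eqOn_span ?_ hx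
  rintro _ ⟨a, ha, rfl⟩
  exact h a ha

theorem linearMap_ext_single_one {φ ψ : (A →₀ R) →ₗ[R] M}
    (h : ∀ a, φ (single a 1) = ψ (single a 1)) : φ = ψ :=
  lhom_ext' fun a => LinearMap.ext_ring (h a)

theorem eq_zero_of_mem_supported_of_disjoint {S T : Set A} (hST : Disjoint S T) {x : A →₀ R}
    (hS : x ∈ supported R R S) (hT : x ∈ supported R R T) : x = 0 :=
  Submodule.disjoint_def.1 (disjoint_supported_supported hST) x hS hT

theorem filter_mem_supported {S : Set A} {x : A →₀ R} (hx : x ∈ supported R R S)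
    (p : A → Prop) [DecidablePred p] : x.filter p ∈ supported R R {a | a ∈ S ∧ p a} := by
  rw [mem_supported_iff_forall_ne] at *
  intro a ha
  by_cases hp : p a
  · exact ⟨hx a (by rwa [filter_apply_pos _ _ hp] at ha), hp⟩
  · exact absurd (filter_apply_neg _ _ hp) ha

/-- Exactness of an endomorphism `D` between two coordinate subspaces: every vector supported in
`S` that `D` kills is the image of a vector supported in `T`. -/
def ExactOn (D : (A →₀ R) →ₗ[R] (A →₀ R)) (S T : Set A) : Prop :=
  ∀ z ∈ supported R R S, D z = 0 → ∃ y ∈ supported R R T, D y = z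

theorem exactOn_preimage_iff {f : A → B} (hf : Function.Injective f)
    {D : (A →₀ R) →ₗ[R] (A →₀ R)} {D' : (B →₀ R) →ₗ[R] (B →₀ R)}
    (hD : ∀ x, mapDomain f (D x) = D' (mapDomain f x)) {S T : Set B} :
    ExactOn D (f ⁻¹' S) (f ⁻¹' T) ↔ ExactOn D' (S ∩ Set.range f) (T ∩ Set.range f) := by
  have hinj : Function.Injective (mapDomain f : (A →₀ R) → (B →₀ R)) := mapDomain_injective hf
  simp only [ExactOn, ← Set.image_preimage_eq_inter_range, ← lmapDomain_supported,
    Submodule.mem_map, lmapDomain_apply, forall_exists_index, and_imp, forall_apply_eq_imp_iff₂,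
    exists_exists_and_eq_and, ← hD, hinj.eq_iff, hinj.eq_iff' mapDomain_zero]

/-- The compression of an endomorphism `D` to the coordinate subspace on `S`. -/
def compress (S : Set A) (D : (A →₀ R) →ₗ[R] (A →₀ R)) : (S →₀ R) →ₗ[R] (S →₀ R) :=
  lsubtypeDomain S ∘ₗ D ∘ₗ lmapDomain R R Subtype.val

theorem mapDomain_subtypeDomain {S : Set A} {x : A →₀ R} (hx : x ∈ supported R R S) :
    mapDomain (Subtype.val : S → A) (x.subtypeDomain (· ∈ S)) = x := by
  ext a
  by_cases ha : a ∈ S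
  · exact mapDomain_apply Subtype.val_injective _ (⟨a, ha⟩ : S)
  · rw [mapDomain_of_notMem_range _ _ (by simpa using ha)]
    by_contra hxa
    exact ha (mem_supported_iff_forall_ne.1 hx a (Ne.symm hxa))

theorem mapDomain_val_mem_supported {S : Set A} (x : S →₀ R) :
    mapDomain Subtype.val x ∈ supported R R S :=
  mem_supported_iff_forall_ne.2 fun a ha => by
    by_contra hS
    exact ha (mapDomain_of_notMem_range _ _ (by simpa using hS))

theorem mapDomain_compress {S : Set A} {D : (A →₀ R) →ₗ[R] (A →₀ R)}
    (hD : ∀ a ∈ S, D (single a 1) ∈ supported R R S) (x : S →₀ R) :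
    mapDomain Subtype.val (compress S D x) = D (mapDomain Subtype.val x) :=
  mapDomain_subtypeDomain (map_mem_of_mem_supported D (mapDomain_val_mem_supported x) hD)

theorem exactOn_compress_iff {S : Set A} {D : (A →₀ R) →ₗ[R] (A →₀ R)}
    (hD : ∀ a ∈ S, D (single a 1) ∈ supported R R S) (T T' : Set A) :
    ExactOn (compress S D) (Subtype.val ⁻¹' T) (Subtype.val ⁻¹' T') ↔
      ExactOn D (T ∩ S) (T' ∩ S) := by
  rw [exactOn_preimage_iff Subtype.val_injective (mapDomain_compress hD), Subtype.range_coe]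

theorem compress_single_mem_supported {S T : Set A} {D : (A →₀ R) →ₗ[R] (A →₀ R)} (a : S)
    (h : D (single a.1 1) ∈ supported R R T) :
    compress S D (single a 1) ∈ supported R R (Subtype.val ⁻¹' T) := by
  rw [mem_supported_iff_forall_ne] at h ⊢
  intro c hc
  exact h c (by simpa [compress, lsubtypeDomain_apply] using hc)

end Semiring

-- Recursion on `dim`: the value of `s` at a basis vector `b` may be chosen depending on `s (d b)`.
theorem exists_linearMap_by_recursion_on_dim [Ring R] [AddCommGroup M] [Module R M] (dim : A → ℕ)
    (d : (A →₀ R) →ₗ[R] (A →₀ R))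
    (hd : ∀ b, d (single b 1) ∈ supported R R {c | dim c < dim b}) (Q : A → M → M → Prop)
    (step : ∀ (b : A) (s : (A →₀ R) →ₗ[R] M),
      (∀ c, dim c < dim b → Q c (s (d (single c 1))) (s (single c 1))) →
        ∃ y, Q b (s (d (single b 1))) y) :
    ∃ s : (A →₀ R) →ₗ[R] M, ∀ b, Q b (s (d (single b 1))) (s (single b 1)) := by
  classical
  let extend (b : A) (f : ∀ c, dim c < dim b → M) : (A →₀ R) →ₗ[R] M :=
    linearCombination R fun c => if h : dim c < dim b then f c h else 0
  let value : A → M := (measure dim).wf.fix fun b f =>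
    if h : ∃ y, Q b (extend b f (d (single b 1))) y then h.choose else 0
  let s : (A →₀ R) →ₗ[R] M := linearCombination R value
  have s_single (b : A) : s (single b 1) = value b := by simp [s]
  have extend_d (b : A) : extend b (fun c _ => value c) (d (single b 1)) = s (d (single b 1)) :=
    eq_of_mem_supported (hd b) fun c (hc : dim c < dim b) => by simp [extend, s_single, hc]
  have value_eq (b : A) (h : ∃ y, Q b (s (d (single b 1))) y) :
      Q b (s (d (single b 1))) (value b) := by
    rw [← extend_d] at h ⊢
    have hb : value b = h.choose := ((measure dim).wf.fix_eq _ b).trans (dif_pos h)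
    exact hb ▸ h.choose_spec
  refine ⟨s, fun b => ?_⟩
  induction b using (measure dim).wf.induction with
  | _ b ih => exact s_single b ▸ value_eq b (step b s ih)

end SupportedVectors

section LabeledResolutions

universe u v w

/-- A free complex over `R` with a distinguished basis of cells carrying labels in `L`, such that
the cells with label at most `u` span an exact complex for each `u > ⊥`, and the only cell with
label `⊥` is the base, of dimension `0`. For `L` the lcm-lattice of a monomial ideal `I` these are,
by the Bayer–Sturmfels criterion, the multigraded free resolutions of `S/I`; the cell `b`
stands for a basis element of homological degree `dim b` and multidegree `label b`. -/
structure LabeledResolution (R : Type u) [CommRing R] (L : Type v) [PartialOrder L]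
    [OrderBot L] where
  Cell : Type w
  dim : Cell → ℕ
  label : Cell → L
  d : (Cell →₀ R) →ₗ[R] (Cell →₀ R)
  d_d : ∀ x, d (d x) = 0
  d_single : ∀ b, d (single b 1) ∈ supported R R {c | dim c + 1 = dim b ∧ label c ≤ label b}
  base : Cell
  dim_base : dim base = 0
  label_base : label base = ⊥
  bot_lt_label : ∀ b, b ≠ base → ⊥ < label b
  exact : ∀ u, ⊥ < u → ExactOn d {c | label c ≤ u} {c | label c ≤ u}

namespace LabeledResolution

variable {R : Type*} [CommRing R] {L : Type*} [PartialOrder L] [OrderBot L]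
  (X Y : LabeledResolution R L)

/-- The cells with label strictly below `m` span a complex with no homology in degree `n`. For a
resolution of `S/I` this homology computes `β_{n+1,m}(S/I)`. -/
def Acyclic (m : L) (n : ℕ) : Prop :=
  ExactOn X.d {c | X.dim c = n ∧ X.label c < m} {c | X.dim c = n + 1 ∧ X.label c < m}

section Differential

variable {X}

theorem d_mem_supported {S T : Set X.Cell}
    {x : X.Cell →₀ R} (hx : x ∈ supported R R S)
    (h : ∀ b ∈ S, ∀ c, X.dim c + 1 = X.dim b → X.label c ≤ X.label b → c ∈ T) :
    X.d x ∈ supported R R T :=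
  map_mem_of_mem_supported X.d hx fun b hb =>
    mem_supported_of_subset (X.d_single b) fun c hc => h b hb c hc.1 hc.2

theorem d_mem_supported_label {S : Set L} (hS : IsLowerSet S) {x : X.Cell →₀ R}
    (hx : x ∈ supported R R {c | X.label c ∈ S}) : X.d x ∈ supported R R {c | X.label c ∈ S} :=
  d_mem_supported hx fun _ hb _ _ hcb => hS hcb hb

theorem d_base : X.d (single X.base 1) = 0 := by
  have hd := X.d_single X.base
  simpa [X.dim_base] using hd

theorem d_mem_supported_dim_lt (b : X.Cell) :
    X.d (single b 1) ∈ supported R R {c | X.dim c < X.dim b} :=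
  mem_supported_of_subset (X.d_single b) fun _ hc => Nat.lt_of_succ_le hc.1.le

theorem exists_homogeneous_primitive {u : L} (hu : ⊥ < u) {n : ℕ} {x : X.Cell →₀ R}
    (hx : x ∈ supported R R {c | X.dim c + 1 = n ∧ X.label c ≤ u}) (hdx : X.d x = 0) :
    ∃ y ∈ supported R R {c | X.dim c = n ∧ X.label c ≤ u}, X.d y = x := by
  classical
  obtain ⟨y, hy, rfl⟩ := X.exact u hu x (mem_supported_of_subset hx fun _ hc => hc.2) hdx
  set y₀ := y.filter fun c => X.dim c = n
  set y₁ := y.filter fun c => ¬ X.dim c = n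
  have hy₀ := filter_mem_supported hy fun c => X.dim c = n
  have hy₁ := filter_mem_supported hy fun c => ¬ X.dim c = n
  have hsum : X.d y = X.d y₀ + X.d y₁ := by rw [← map_add, filter_add_filter_not]
  have hdy₀ : X.d y₀ ∈ supported R R {c | X.dim c + 1 = n} :=
    d_mem_supported hy₀ fun _ hb _ hc _ => hc.trans hb.2
  have hdy₁ : X.d y₁ ∈ supported R R {c | X.dim c + 1 = n}ᶜ :=
    d_mem_supported hy₁ fun _ hb _ hc _ hcn => hb.2 (hc.symm.trans hcn)
  have hdy₁' : X.d y₁ ∈ supported R R {c | X.dim c + 1 = n} := by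
    rw [eq_sub_of_add_eq' hsum.symm]
    exact sub_mem (mem_supported_of_subset hx fun _ hc => hc.1) hdy₀
  have hzero := eq_zero_of_mem_supported_of_disjoint disjoint_compl_right hdy₁' hdy₁
  exact ⟨y₀, mem_supported_of_subset hy₀ fun _ hc => ⟨hc.2, hc.1⟩,
    by rw [hsum, hzero, add_zero]⟩

end Differential

section Homomorphisms

variable {X Y}

/-- A linear map between resolutions that raises dimensions by `k` and does not increase labels. -/
def IsFiltered (X Y : LabeledResolution R L) (k : ℕ)
    (φ : (X.Cell →₀ R) →ₗ[R] (Y.Cell →₀ R)) : Prop :=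
  ∀ b, φ (single b 1) ∈ supported R R {c | Y.dim c = X.dim b + k ∧ Y.label c ≤ X.label b}

theorem IsFiltered.map_mem_supported {k : ℕ} {φ : (X.Cell →₀ R) →ₗ[R] (Y.Cell →₀ R)}
    (hφ : IsFiltered X Y k φ) {S : Set X.Cell} {T : Set Y.Cell}
    {x : X.Cell →₀ R} (hx : x ∈ supported R R S)
    (h : ∀ b ∈ S, ∀ c, Y.dim c = X.dim b + k → Y.label c ≤ X.label b → c ∈ T) :
    φ x ∈ supported R R T :=
  map_mem_of_mem_supported φ hx fun b hb =>
    mem_supported_of_subset (hφ b) fun c hc => h b hb c hc.1 hc.2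

theorem IsFiltered.map_mem_supported_lt {k n : ℕ} {m : L}
    {φ : (X.Cell →₀ R) →ₗ[R] (Y.Cell →₀ R)} (hφ : IsFiltered X Y k φ) {x : X.Cell →₀ R}
    (hx : x ∈ supported R R {c | X.dim c = n ∧ X.label c < m}) :
    φ x ∈ supported R R {c | Y.dim c = n + k ∧ Y.label c < m} :=
  hφ.map_mem_supported hx fun _ hb _ hc hcb => ⟨hb.1 ▸ hc, hcb.trans_lt hb.2⟩

-- The case `ε = 1`, `γ = 0` produces chain maps; `ε = -1` and `γ` a difference of chain maps
-- produces chain homotopies.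
theorem exists_lift (ε : R) (k : ℕ) (γ : (X.Cell →₀ R) →ₗ[R] (Y.Cell →₀ R))
    (hγ : ∀ b, γ (single b 1) ∈
      supported R R {c | Y.dim c + 1 = X.dim b + k ∧ Y.label c ≤ X.label b})
    (hcomm : ∀ x, Y.d (γ x) + ε • γ (X.d x) = 0) (y₀ : Y.Cell →₀ R)
    (hy₀ : y₀ ∈ supported R R {c | Y.dim c = k ∧ Y.label c ≤ ⊥})
    (hdy₀ : Y.d y₀ = γ (single X.base 1)) :
    ∃ s : (X.Cell →₀ R) →ₗ[R] (Y.Cell →₀ R), s (single X.base 1) = y₀ ∧ IsFiltered X Y k s ∧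
      ∀ x, Y.d (s x) = γ x + ε • s (X.d x) := by
  suffices ∃ s : (X.Cell →₀ R) →ₗ[R] (Y.Cell →₀ R), ∀ b, (b = X.base → s (single b 1) = y₀) ∧
      s (single b 1) ∈ supported R R {c | Y.dim c = X.dim b + k ∧ Y.label c ≤ X.label b} ∧
      Y.d (s (single b 1)) = γ (single b 1) + ε • s (X.d (single b 1)) by
    obtain ⟨s, hs⟩ := this
    refine ⟨s, (hs X.base).1 rfl, fun b => (hs b).2.1, fun x => ?_⟩
    have h : Y.d ∘ₗ s = γ + ε • s ∘ₗ X.d := linearMap_ext_single_one fun b => (hs b).2.2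
    exact LinearMap.congr_fun h x
  refine exists_linearMap_by_recursion_on_dim X.dim X.d d_mem_supported_dim_lt (fun b z y =>
    (b = X.base → y = y₀) ∧ y ∈ supported R R {c | Y.dim c = X.dim b + k ∧ Y.label c ≤ X.label b} ∧
      Y.d y = γ (single b 1) + ε • z) fun b s ih => ?_
  rcases eq_or_ne b X.base with rfl | hb
  · exact ⟨y₀, fun _ => rfl, by simpa [X.dim_base, X.label_base] using hy₀,
      by rw [d_base, map_zero, smul_zero, add_zero, hdy₀]⟩
  have hsd : s (X.d (single b 1)) ∈
      supported R R {c | Y.dim c + 1 = X.dim b + k ∧ Y.label c ≤ X.label b} :=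
    map_mem_of_mem_supported s (X.d_single b) fun c hc =>
      mem_supported_of_subset (ih c (Nat.lt_of_succ_le hc.1.le)).2.1 fun a ha =>
        ⟨by have := ha.1; have := hc.1; omega, ha.2.trans hc.2⟩
  have hdsd : Y.d (s (X.d (single b 1))) = γ (X.d (single b 1)) := by
    have h : (Y.d ∘ₗ s) (X.d (single b 1)) = (γ + ε • s ∘ₗ X.d) (X.d (single b 1)) :=
      eq_of_mem_supported (d_mem_supported_dim_lt b) fun c hc => (ih c hc).2.2
    simpa [X.d_d] using h
  obtain ⟨y, hy, hdy⟩ := exists_homogeneous_primitive (X.bot_lt_label b hb)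
    (add_mem (hγ b) (Submodule.smul_mem _ ε hsd)) (by rw [map_add, map_smul, hdsd, hcomm])
  exact ⟨y, fun h => absurd h hb, hy, hdy⟩

/-- A morphism of resolutions: a label-filtered chain map that lifts the identity of `S/I`. -/
structure Hom (X Y : LabeledResolution R L) where
  toLinearMap : (X.Cell →₀ R) →ₗ[R] (Y.Cell →₀ R)
  isFiltered : IsFiltered X Y 0 toLinearMap
  d_map : ∀ x, Y.d (toLinearMap x) = toLinearMap (X.d x)
  map_base : toLinearMap (single X.base 1) = single Y.base 1

namespace Hom

instance : CoeFun (Hom X Y) fun _ => (X.Cell →₀ R) → (Y.Cell →₀ R) := ⟨fun φ => φ.toLinearMap⟩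

/-- The identity morphism of a resolution. -/
def id (X : LabeledResolution R L) : Hom X X where
  toLinearMap := LinearMap.id
  isFiltered _ := single_one_mem_supported ⟨rfl, le_rfl⟩
  d_map _ := rfl
  map_base := rfl

/-- Composition of morphisms of resolutions. -/
def comp {Z : LabeledResolution R L} (ψ : Hom Y Z) (φ : Hom X Y) : Hom X Z where
  toLinearMap := ψ.toLinearMap ∘ₗ φ.toLinearMap
  isFiltered b := ψ.isFiltered.map_mem_supported (φ.isFiltered b) fun _ ha _ hc hca =>
    ⟨hc.trans ha.1, hca.trans ha.2⟩
  d_map x := by simp only [LinearMap.comp_apply, ψ.d_map, φ.d_map]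
  map_base := by simp only [LinearMap.comp_apply, φ.map_base, ψ.map_base]

instance (X Y : LabeledResolution R L) : Nonempty (Hom X Y) := by
  obtain ⟨φ, hbase, hφ, hdφ⟩ := exists_lift (X := X) (Y := Y) 1 0 0
    (fun _ => by simp) (fun _ => by simp) (single Y.base 1)
    (single_one_mem_supported ⟨Y.dim_base, Y.label_base.le⟩) (by simp [d_base])
  exact ⟨φ, hφ, by simpa using hdφ, hbase⟩

theorem exists_homotopy (φ ψ : Hom X Y) :
    ∃ s : (X.Cell →₀ R) →ₗ[R] (Y.Cell →₀ R), IsFiltered X Y 1 s ∧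
      ∀ x, Y.d (s x) = φ x - ψ x - s (X.d x) := by
  obtain ⟨s, -, hs, hds⟩ := exists_lift (-1) 1 (φ.toLinearMap - ψ.toLinearMap)
    (fun b => mem_supported_of_subset (sub_mem (φ.isFiltered b) (ψ.isFiltered b)) fun _ hc =>
      ⟨congrArg Nat.succ hc.1, hc.2⟩)
    (fun x => by simp [φ.d_map, ψ.d_map]) 0 (zero_mem _) (by simp [φ.map_base, ψ.map_base])
  exact ⟨s, hs, fun x => by simp [hds, sub_eq_add_neg]⟩

end Hom

theorem Acyclic.of_acyclic {m : L} {n : ℕ} (h : X.Acyclic m n) : Y.Acyclic m n := by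
  intro z hz hdz
  obtain ⟨φ⟩ : Nonempty (Hom Y X) := inferInstance
  obtain ⟨ψ⟩ : Nonempty (Hom X Y) := inferInstance
  obtain ⟨s, hs, hds⟩ := Hom.exists_homotopy (ψ.comp φ) (Hom.id Y)
  obtain ⟨y, hy, hdy⟩ := h (φ z) (φ.isFiltered.map_mem_supported_lt hz)
    (by rw [φ.d_map, hdz, map_zero])
  refine ⟨ψ y - s z,
    sub_mem (ψ.isFiltered.map_mem_supported_lt hy) (hs.map_mem_supported_lt hz), ?_⟩
  rw [map_sub, ψ.d_map, hdy, hds, hdz, map_zero, sub_zero]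
  exact sub_sub_cancel _ _

variable (X Y) in
theorem acyclic_iff {m : L} {n : ℕ} : X.Acyclic m n ↔ Y.Acyclic m n :=
  ⟨Acyclic.of_acyclic, Acyclic.of_acyclic⟩

end Homomorphisms

end LabeledResolution

end LabeledResolutions

section MinimalResolutions

universe u v w

variable {𝕜 : Type u} [Field 𝕜] {L : Type v} [PartialOrder L] [OrderBot L]

namespace LabeledResolution

section Cancellation

variable {X : LabeledResolution.{u, v, w} 𝕜 L} {b₁ b₂ : X.Cell}

/-- A pair of cells that can be cancelled: they carry the same label and the second one occurs in
the differential of the first one. -/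
structure IsCancellable (b₁ b₂ : X.Cell) : Prop where
  label_eq : X.label b₁ = X.label b₂
  d_ne_zero : X.d (single b₁ 1) b₂ ≠ 0

theorem of_d_single_apply_ne_zero {b c : X.Cell} (h : X.d (single b 1) c ≠ 0) :
    X.dim c + 1 = X.dim b ∧ X.label c ≤ X.label b :=
  mem_supported_iff_forall_ne.1 (X.d_single b) c h

theorem d_single_apply_self (b : X.Cell) : X.d (single b 1) b = 0 := by
  by_contra h
  have := (of_d_single_apply_ne_zero h).1
  omega

theorem IsCancellable.ne (h : IsCancellable b₁ b₂) : b₁ ≠ b₂ := by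
  rintro rfl
  exact h.d_ne_zero (d_single_apply_self b₁)

theorem IsCancellable.left_ne_base (h : IsCancellable b₁ b₂) : b₁ ≠ X.base := by
  rintro rfl
  exact h.d_ne_zero (by rw [d_base, Finsupp.zero_apply])

theorem IsCancellable.right_ne_base (h : IsCancellable b₁ b₂) : b₂ ≠ X.base := by
  rintro rfl
  exact (X.bot_lt_label b₁ h.left_ne_base).ne' (h.label_eq.trans X.label_base)

/-- The projection onto the span of the cells other than `b₁` and `b₂` along `b₁` and `d b₁`. -/
def cancelProj (b₁ b₂ : X.Cell) : (X.Cell →₀ 𝕜) →ₗ[𝕜] (X.Cell →₀ 𝕜) :=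
  LinearMap.id - (lapply b₁).smulRight (single b₁ 1) -
    ((X.d (single b₁ 1) b₂)⁻¹ • lapply b₂).smulRight (X.d (single b₁ 1))

theorem cancelProj_apply (x : X.Cell →₀ 𝕜) :
    cancelProj b₁ b₂ x = x - x b₁ • single b₁ 1 -
      ((X.d (single b₁ 1) b₂)⁻¹ * x b₂) • X.d (single b₁ 1) := by
  simp [cancelProj]

theorem IsCancellable.cancelProj_single (h : IsCancellable b₁ b₂) :
    cancelProj b₁ b₂ (single b₁ 1) = 0 := by
  simp [cancelProj_apply, h.ne]

theorem IsCancellable.cancelProj_d_single (h : IsCancellable b₁ b₂) :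
    cancelProj b₁ b₂ (X.d (single b₁ 1)) = 0 := by
  simp [cancelProj_apply, d_single_apply_self, h.d_ne_zero]

theorem cancelProj_eq_self {x : X.Cell →₀ 𝕜} (hx : x ∈ supported 𝕜 𝕜 {b | b ≠ b₁ ∧ b ≠ b₂}) :
    cancelProj b₁ b₂ x = x := by
  have hx₁ : x b₁ = 0 := by
    by_contra hne
    exact (mem_supported_iff_forall_ne.1 hx b₁ hne).1 rfl
  have hx₂ : x b₂ = 0 := by
    by_contra hne
    exact (mem_supported_iff_forall_ne.1 hx b₂ hne).2 rfl
  simp [cancelProj_apply, hx₁, hx₂]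

theorem IsCancellable.cancelProj_mem_supported (h : IsCancellable b₁ b₂) {S : Set X.Cell}
    {x : X.Cell →₀ 𝕜} (hx : x ∈ supported 𝕜 𝕜 S)
    (hS : b₂ ∈ S → ∀ b, X.dim b = X.dim b₂ → X.label b ≤ X.label b₂ → b ∈ S) :
    cancelProj b₁ b₂ x ∈ supported 𝕜 𝕜 (S ∩ {b | b ≠ b₁ ∧ b ≠ b₂}) := by
  rw [mem_supported_iff_forall_ne] at hx ⊢
  intro b hb
  rw [cancelProj_apply] at hb
  have hb₁ : b ≠ b₁ := by
    rintro rfl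
    simp [d_single_apply_self] at hb
  have hb₂ : b ≠ b₂ := by
    rintro rfl
    simp [hb₁, mul_right_comm _ (x b), h.d_ne_zero] at hb
  refine ⟨?_, hb₁, hb₂⟩
  by_cases hxb : x b = 0
  · have hmul : (X.d (single b₁ 1) b₂)⁻¹ * x b₂ * X.d (single b₁ 1) b ≠ 0 := by
      simpa [hxb, hb₁.symm] using hb
    have hdb := of_d_single_apply_ne_zero (right_ne_zero_of_mul hmul)
    have hdb₂ := of_d_single_apply_ne_zero h.d_ne_zero
    exact hS (hx b₂ (right_ne_zero_of_mul (left_ne_zero_of_mul hmul))) b (by omega)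
      (hdb.2.trans h.label_eq.le)
  · exact hx b hxb

theorem IsCancellable.cancelProj_d_cancelProj (h : IsCancellable b₁ b₂) (x : X.Cell →₀ 𝕜) :
    cancelProj b₁ b₂ (X.d (cancelProj b₁ b₂ x)) = cancelProj b₁ b₂ (X.d x) := by
  simp only [cancelProj_apply (b₁ := b₁) (b₂ := b₂) x, map_sub, map_smul, h.cancelProj_d_single,
    X.d_d, smul_zero, sub_zero]

theorem IsCancellable.cancelProj_d_mem_supported (h : IsCancellable b₁ b₂) (b : X.Cell) :
    cancelProj b₁ b₂ (X.d (single b 1)) ∈ supported 𝕜 𝕜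
      ({c | X.dim c + 1 = X.dim b ∧ X.label c ≤ X.label b} ∩ {c | c ≠ b₁ ∧ c ≠ b₂}) :=
  h.cancelProj_mem_supported (X.d_single b) fun hb₂ _ hdim hlabel =>
    ⟨hdim ▸ hb₂.1, hlabel.trans hb₂.2⟩

theorem IsCancellable.exactOn_cancelProj_comp_d (h : IsCancellable b₁ b₂) {u : L} (hu : ⊥ < u) :
    ExactOn (cancelProj b₁ b₂ ∘ₗ X.d) ({b | X.label b ≤ u} ∩ {b | b ≠ b₁ ∧ b ≠ b₂})
      ({b | X.label b ≤ u} ∩ {b | b ≠ b₁ ∧ b ≠ b₂}) := by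
  intro z hz hdz
  have hzu : z ∈ supported 𝕜 𝕜 {b | X.label b ≤ u} := mem_supported_of_subset hz fun _ hb => hb.1
  set v := X.d (single b₁ 1)
  set c := (v b₂)⁻¹ * X.d z b₂
  have hdz_eq : X.d z = X.d z b₁ • single b₁ 1 + c • v := by
    rwa [LinearMap.comp_apply, cancelProj_apply, sub_sub, sub_eq_zero] at hdz
  have hdz₁ : X.d z b₁ = 0 := by
    have hsmul : X.d z b₁ • v = 0 := by
      have hddz := congrArg X.d hdz_eq
      rwa [map_add, map_smul, map_smul, X.d_d, X.d_d, smul_zero, add_zero, eq_comm] at hddz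
    simpa [h.d_ne_zero, v] using DFunLike.congr_fun hsmul b₂
  have hcb₁ : c • single b₁ (1 : 𝕜) ∈ supported 𝕜 𝕜 {b | X.label b ≤ u} := by
    by_cases hc : X.d z b₂ = 0
    · simp [c, hc]
    · refine Submodule.smul_mem _ _ (single_one_mem_supported (h.label_eq.le.trans ?_))
      exact mem_supported_iff_forall_ne.1 (d_mem_supported_label (isLowerSet_Iic u) hzu) b₂ hc
  obtain ⟨w, hw, hdw⟩ := X.exact u hu (z - c • single b₁ 1) (sub_mem hzu hcb₁)
    (by rw [map_sub, map_smul, hdz_eq, hdz₁, zero_smul, zero_add, sub_self])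
  refine ⟨cancelProj b₁ b₂ w,
    h.cancelProj_mem_supported hw fun hb₂ _ _ hb => hb.trans hb₂, ?_⟩
  rw [LinearMap.comp_apply, h.cancelProj_d_cancelProj, hdw, map_sub, map_smul, h.cancelProj_single,
    smul_zero, sub_zero, cancelProj_eq_self (mem_supported_of_subset hz fun _ hb => hb.2)]

theorem IsCancellable.cancelProj_comp_d_mem_supported (h : IsCancellable b₁ b₂) :
    ∀ b ∈ {b | b ≠ b₁ ∧ b ≠ b₂},
      (cancelProj b₁ b₂ ∘ₗ X.d) (single b 1) ∈ supported 𝕜 𝕜 {b | b ≠ b₁ ∧ b ≠ b₂} :=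
  fun b _ => mem_supported_of_subset (h.cancelProj_d_mem_supported b) fun _ hc => hc.2

/-- The resolution obtained by cancelling two cells against each other. -/
def cancel (h : IsCancellable b₁ b₂) : LabeledResolution.{u, v, w} 𝕜 L where
  Cell := {b | b ≠ b₁ ∧ b ≠ b₂}
  dim b := X.dim b
  label b := X.label b
  d := compress {b | b ≠ b₁ ∧ b ≠ b₂} (cancelProj b₁ b₂ ∘ₗ X.d)
  d_d x := mapDomain_injective Subtype.val_injective <| by
    simp only [mapDomain_compress h.cancelProj_comp_d_mem_supported, LinearMap.comp_apply,
      h.cancelProj_d_cancelProj, X.d_d, map_zero, mapDomain_zero]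
  d_single b := compress_single_mem_supported (T := {c | X.dim c + 1 = X.dim b ∧
    X.label c ≤ X.label b}) b <|
      mem_supported_of_subset (h.cancelProj_d_mem_supported b) fun _ hc => hc.1
  base := ⟨X.base, h.left_ne_base.symm, h.right_ne_base.symm⟩
  dim_base := X.dim_base
  label_base := X.label_base
  bot_lt_label b hb := X.bot_lt_label b fun hb' => hb (Subtype.ext hb')
  exact u hu := (exactOn_compress_iff h.cancelProj_comp_d_mem_supported
    {b | X.label b ≤ u} {b | X.label b ≤ u}).2 (h.exactOn_cancelProj_comp_d hu)

end Cancellation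

/-- A resolution is minimal if its differential strictly decreases labels. -/
def IsMinimal (X : LabeledResolution 𝕜 L) : Prop :=
  ∀ b, X.d (single b 1) ∈ supported 𝕜 𝕜 {c | X.label c < X.label b}

theorem exists_isMinimal (X : LabeledResolution.{u, v, w} 𝕜 L) [Finite X.Cell] :
    ∃ F : LabeledResolution.{u, v, w} 𝕜 L, F.IsMinimal := by
  induction hN : Nat.card X.Cell using Nat.strong_induction_on generalizing X with
  | _ N ih =>
    by_cases h : ∃ b₁ b₂ : X.Cell, IsCancellable b₁ b₂
    · obtain ⟨b₁, b₂, h⟩ := h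
      have : Finite (cancel h).Cell := inferInstanceAs (Finite {b // b ≠ b₁ ∧ b ≠ b₂})
      have hlt : Nat.card (cancel h).Cell < N := hN ▸ Finite.card_subtype_lt fun hb => hb.1 rfl
      exact ih _ hlt (cancel h) rfl
    · refine ⟨X, fun b => mem_supported_iff_forall_ne.2 fun c hc => ?_⟩
      exact (of_d_single_apply_ne_zero hc).2.lt_of_ne fun hcb => h ⟨b, c, hcb.symm, hc⟩

section IsMinimal

variable {F : LabeledResolution 𝕜 L}

theorem IsMinimal.d_mem_supported_lt (hF : F.IsMinimal) {m : L} {x : F.Cell →₀ 𝕜}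
    (hx : x ∈ supported 𝕜 𝕜 {b | F.label b ≤ m}) :
    F.d x ∈ supported 𝕜 𝕜 {b | F.label b < m} :=
  map_mem_of_mem_supported F.d hx fun b hb =>
    mem_supported_of_subset (hF b) fun _ hc => lt_of_lt_of_le hc hb

theorem single_one_notMem_supported_lt (b : F.Cell) :
    single b (1 : 𝕜) ∉ supported 𝕜 𝕜 {c | F.label c < F.label b} := fun h =>
  lt_irrefl (F.label b) (mem_supported_iff_forall_ne.1 h b (by simp))

theorem IsMinimal.not_acyclic_label (hF : F.IsMinimal) {b : F.Cell} {n : ℕ}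
    (hb : F.dim b = n + 1) : ¬ F.Acyclic (F.label b) n := by
  intro h
  have hb_base : b ≠ F.base := by
    rintro rfl
    exact n.succ_ne_zero (hb.symm.trans F.dim_base)
  have hdb : F.d (single b 1) ∈ supported 𝕜 𝕜 {c | F.dim c = n ∧ F.label c < F.label b} :=
    mem_supported_iff_forall_ne.2 fun c hc =>
      ⟨Nat.succ_injective ((of_d_single_apply_ne_zero hc).1.trans hb),
        mem_supported_iff_forall_ne.1 (hF b) c hc⟩
  obtain ⟨y, hy, hdy⟩ := h (F.d (single b 1)) hdb (F.d_d _)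
  have hy_lt : y ∈ supported 𝕜 𝕜 {c | F.label c < F.label b} :=
    mem_supported_of_subset hy fun _ hc => hc.2
  obtain ⟨w, hw, hdw⟩ := F.exact (F.label b) (F.bot_lt_label b hb_base) (single b 1 - y)
    (sub_mem (single_one_mem_supported le_rfl) (mem_supported_of_subset hy_lt fun _ hc => hc.le))
    (by rw [map_sub, hdy, sub_self])
  have hmem := add_mem (hF.d_mem_supported_lt hw) hy_lt
  rw [hdw, sub_add_cancel] at hmem
  exact single_one_notMem_supported_lt b hmem

theorem IsMinimal.not_acyclic_iff (hF : F.IsMinimal) {m : L} (hm : ⊥ < m) {n : ℕ} :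
    ¬ F.Acyclic m n ↔ ∃ b, F.dim b = n + 1 ∧ F.label b = m := by
  refine ⟨fun h => ?_, fun ⟨b, hb, hbm⟩ => hbm ▸ hF.not_acyclic_label hb⟩
  contrapose! h
  intro z hz hdz
  obtain ⟨y, hy, hdy⟩ := exists_homogeneous_primitive hm (n := n + 1)
    (mem_supported_of_subset hz fun _ hc => ⟨congrArg Nat.succ hc.1, hc.2.le⟩) hdz
  exact ⟨y, mem_supported_of_subset hy fun b hb => ⟨hb.1, hb.2.lt_of_ne (h b hb.1)⟩, hdy⟩

-- A retraction of `j` is homotopic to the identity, and for minimal `F` boundaries and homotopies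
-- do not contribute to the coefficient of `b`.
theorem IsMinimal.d_sub_map_single_notMem (hF : F.IsMinimal) {T : LabeledResolution 𝕜 L}
    (j : Hom F T) (b : F.Cell) {w : T.Cell →₀ 𝕜}
    (hw : w ∈ supported 𝕜 𝕜 {c | T.label c ≤ F.label b}) :
    T.d w - j (single b 1) ∉ supported 𝕜 𝕜 {c | T.label c < F.label b} := by
  intro he
  obtain ⟨μ⟩ : Nonempty (Hom T F) := inferInstance
  obtain ⟨s, hs, hds⟩ := Hom.exists_homotopy (μ.comp j) (Hom.id F)
  have hdμw : F.d (μ w) ∈ supported 𝕜 𝕜 {c | F.label c < F.label b} :=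
    hF.d_mem_supported_lt (μ.isFiltered.map_mem_supported hw fun _ ha _ _ hc => hc.trans ha)
  have hμe : μ (T.d w - j (single b 1)) ∈ supported 𝕜 𝕜 {c | F.label c < F.label b} :=
    μ.isFiltered.map_mem_supported he fun _ ha _ _ hc => lt_of_le_of_lt hc ha
  have hdsb : F.d (s (single b 1)) ∈ supported 𝕜 𝕜 {c | F.label c < F.label b} :=
    hF.d_mem_supported_lt (mem_supported_of_subset (hs b) fun _ hc => hc.2)
  have hsdb : s (F.d (single b 1)) ∈ supported 𝕜 𝕜 {c | F.label c < F.label b} :=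
    hs.map_mem_supported (hF b) fun _ ha _ _ hc => lt_of_le_of_lt hc ha
  refine single_one_notMem_supported_lt b ?_
  have hb : single b 1 = F.d (μ w) - μ (T.d w - j (single b 1)) - F.d (s (single b 1)) -
      s (F.d (single b 1)) := by
    rw [hds, map_sub, μ.d_map]
    simp only [Hom.comp, Hom.id, LinearMap.comp_apply, LinearMap.id_apply]
    abel
  rw [hb]
  exact sub_mem (sub_mem (sub_mem hdμw hμe) hdsb) hsdb

end IsMinimal

end LabeledResolution

end MinimalResolutions

section OuterProducts

variable {R A B A' B' : Type*} [CommRing R]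

/-- The bilinear map sending `x` and `y` to their outer product `(a, b) ↦ x a * y b`, that is, to
`x ⊗ y` under `(A →₀ R) ⊗ (B →₀ R) ≃ (A × B →₀ R)`. -/
def outerProd : (A →₀ R) →ₗ[R] (B →₀ R) →ₗ[R] (A × B →₀ R) :=
  (TensorProduct.mk R _ _).compr₂ (finsuppTensorFinsupp' R A B).toLinearMap

/-- The tensor product of two linear maps between free modules with given bases. -/
def outerProdMap (φ : (A →₀ R) →ₗ[R] (A' →₀ R)) (ψ : (B →₀ R) →ₗ[R] (B' →₀ R)) :
    (A × B →₀ R) →ₗ[R] (A' × B' →₀ R) :=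
  (finsuppTensorFinsupp' R A' B').toLinearMap ∘ₗ TensorProduct.map φ ψ ∘ₗ
    (finsuppTensorFinsupp' R A B).symm.toLinearMap

theorem outerProdMap_outerProd (φ : (A →₀ R) →ₗ[R] (A' →₀ R)) (ψ : (B →₀ R) →ₗ[R] (B' →₀ R))
    (x : A →₀ R) (y : B →₀ R) :
    outerProdMap φ ψ (outerProd x y) = outerProd (φ x) (ψ y) := by
  simp [outerProdMap, outerProd]

theorem outerProd_single (a : A) (b : B) :
    outerProd (single a (1 : R)) (single b 1) = single (a, b) 1 := by
  simp [outerProd]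

theorem outerProd_single_mem_supported {S : Set (A × B)} {a : A} {b : B} (h : (a, b) ∈ S) :
    outerProd (single a (1 : R)) (single b 1) ∈ supported R R S := by
  rw [outerProd_single]
  exact single_one_mem_supported h

theorem outerProd_mem_supported {S : Set A} {T : Set B} {x : A →₀ R} {y : B →₀ R}
    (hx : x ∈ supported R R S) (hy : y ∈ supported R R T) :
    outerProd x y ∈ supported R R (S ×ˢ T) := by
  rw [mem_supported_iff_forall_ne] at *
  rintro ⟨a, b⟩ hab
  have h : outerProd x y (a, b) = x a * y b := by simp [outerProd]
  rw [h] at hab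
  exact ⟨hx a (left_ne_zero_of_mul hab), hy b (right_ne_zero_of_mul hab)⟩

end OuterProducts

section TensorProducts

variable {R : Type*} [CommRing R] {L : Type*}

namespace LabeledResolution

section PartialOrder

variable [PartialOrder L] [OrderBot L] (X : LabeledResolution R L)

/-- The sign operator `b ↦ (-1) ^ dim b • b`. -/
def sign : (X.Cell →₀ R) →ₗ[R] (X.Cell →₀ R) :=
  linearCombination R fun b => (-1 : R) ^ X.dim b • single b 1

theorem sign_single (b : X.Cell) : X.sign (single b 1) = (-1 : R) ^ X.dim b • single b 1 := by
  rw [sign, linearCombination_single, one_smul]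

theorem sign_sign (x : X.Cell →₀ R) : X.sign (X.sign x) = x := by
  have h : X.sign ∘ₗ X.sign = LinearMap.id := linearMap_ext_single_one fun b => by
    rw [LinearMap.comp_apply, sign_single, map_smul, sign_single, smul_smul, ← mul_pow,
      neg_one_mul, neg_neg, one_pow, one_smul, LinearMap.id_apply]
  exact LinearMap.congr_fun h x

theorem d_sign (x : X.Cell →₀ R) : X.d (X.sign x) = -X.sign (X.d x) := by
  have h : X.d ∘ₗ X.sign = -(X.sign ∘ₗ X.d) := linearMap_ext_single_one fun b => by
    have hsign : X.sign (X.d (single b 1)) = (-(-1 : R) ^ X.dim b • LinearMap.id) _ :=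
      eq_of_mem_supported (X.d_single b) fun c hc => by
        rw [sign_single, ← hc.1, pow_succ, mul_neg_one, neg_neg, LinearMap.smul_apply,
          LinearMap.id_apply]
    rw [LinearMap.comp_apply, sign_single, map_smul, LinearMap.neg_apply, LinearMap.comp_apply,
      hsign, LinearMap.smul_apply, neg_smul, neg_neg, LinearMap.id_apply]
  exact LinearMap.congr_fun h x

theorem exists_contraction {u : L} (hu : ⊥ < u) :
    ∃ h : (X.Cell →₀ R) →ₗ[R] (X.Cell →₀ R), ∀ b, X.label b ≤ u →
      h (single b 1) ∈ supported R R {c | X.label c ≤ u} ∧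
        X.d (h (single b 1)) = single b 1 - h (X.d (single b 1)) := by
  refine exists_linearMap_by_recursion_on_dim X.dim X.d d_mem_supported_dim_lt (fun b z y =>
    X.label b ≤ u → y ∈ supported R R {c | X.label c ≤ u} ∧ X.d y = single b 1 - z)
    fun b h ih => ?_
  by_cases hb : X.label b ≤ u
  swap
  · exact ⟨0, fun hb' => absurd hb' hb⟩
  have ih' (c : X.Cell) (hc : X.dim c + 1 = X.dim b ∧ X.label c ≤ X.label b) :=
    ih c (Nat.lt_of_succ_le hc.1.le) (hc.2.trans hb)
  have hmem : h (X.d (single b 1)) ∈ supported R R {c | X.label c ≤ u} :=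
    map_mem_of_mem_supported h (X.d_single b) fun c hc => (ih' c hc).1
  have hd : (X.d ∘ₗ h) (X.d (single b 1)) =
      (LinearMap.id - h ∘ₗ X.d : (X.Cell →₀ R) →ₗ[R] _) (X.d (single b 1)) :=
    eq_of_mem_supported (X.d_single b) fun c hc => (ih' c hc).2
  obtain ⟨y, hy, hdy⟩ := X.exact u hu (single b 1 - h (X.d (single b 1)))
    (sub_mem (single_one_mem_supported hb) hmem) (by
      rw [map_sub, ← LinearMap.comp_apply X.d h, hd, LinearMap.sub_apply, LinearMap.comp_apply,
        X.d_d, map_zero, sub_zero, LinearMap.id_apply, sub_self])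
  exact ⟨y, fun _ => ⟨hy, hdy⟩⟩

end PartialOrder

variable [SemilatticeSup L] [OrderBot L] (X Y : LabeledResolution R L)

/-- The differential of the tensor product, with the sign on the second factor. -/
def tensorD : (X.Cell × Y.Cell →₀ R) →ₗ[R] (X.Cell × Y.Cell →₀ R) :=
  outerProdMap X.d Y.sign + outerProdMap LinearMap.id Y.d

theorem tensorD_outerProd (x : X.Cell →₀ R) (y : Y.Cell →₀ R) :
    X.tensorD Y (outerProd x y) = outerProd (X.d x) (Y.sign y) + outerProd x (Y.d y) := by
  simp only [tensorD, LinearMap.add_apply, outerProdMap_outerProd, LinearMap.id_apply]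

theorem tensorD_outerProd_base (x : X.Cell →₀ R) :
    X.tensorD Y (outerProd x (single Y.base 1)) = outerProd (X.d x) (single Y.base 1) := by
  rw [tensorD_outerProd, d_base, map_zero, add_zero, sign_single, Y.dim_base, pow_zero, one_smul]

theorem tensorD_base_outerProd (y : Y.Cell →₀ R) :
    X.tensorD Y (outerProd (single X.base 1) y) = outerProd (single X.base 1) (Y.d y) := by
  rw [tensorD_outerProd, d_base, map_zero, LinearMap.zero_apply, zero_add]

theorem tensorD_tensorD (x : X.Cell × Y.Cell →₀ R) : X.tensorD Y (X.tensorD Y x) = 0 := by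
  have h : X.tensorD Y ∘ₗ X.tensorD Y = 0 := linearMap_ext_single_one fun b => by
    rw [← outerProd_single, LinearMap.comp_apply, tensorD_outerProd, map_add, tensorD_outerProd,
      tensorD_outerProd, X.d_d, Y.d_d, Y.d_sign]
    simp
  exact LinearMap.congr_fun h x

theorem tensorD_single (b : X.Cell × Y.Cell) : X.tensorD Y (single b 1) ∈ supported R R
    {c | (X.dim c.1 + 1 = X.dim b.1 ∧ Y.dim c.2 = Y.dim b.2 ∨
        X.dim c.1 = X.dim b.1 ∧ Y.dim c.2 + 1 = Y.dim b.2) ∧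
      X.label c.1 ⊔ Y.label c.2 ≤ X.label b.1 ⊔ Y.label b.2} := by
  rw [← outerProd_single, tensorD_outerProd]
  refine add_mem ?_ ?_
  · rw [sign_single, map_smul]
    refine Submodule.smul_mem _ _ (mem_supported_of_subset (outerProd_mem_supported
      (X.d_single b.1) (single_one_mem_supported (Set.mem_singleton b.2))) ?_)
    rintro ⟨c, _⟩ ⟨⟨hdim, hlabel⟩, rfl⟩
    exact ⟨Or.inl ⟨hdim, rfl⟩, sup_le_sup_right hlabel _⟩
  · refine mem_supported_of_subset (outerProd_mem_supported
      (single_one_mem_supported (Set.mem_singleton b.1)) (Y.d_single b.2)) ?_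
    rintro ⟨_, c⟩ ⟨rfl, hdim, hlabel⟩
    exact ⟨Or.inr ⟨rfl, hdim⟩, sup_le_sup_left hlabel _⟩

-- If `h` contracts the cells of `X` with label at most `u`, then `h ⊗ sign` contracts those of the
-- tensor product.
theorem exactOn_tensorD {u : L} (hu : ⊥ < u) :
    ExactOn (X.tensorD Y) {c | X.label c.1 ⊔ Y.label c.2 ≤ u}
      {c | X.label c.1 ⊔ Y.label c.2 ≤ u} := by
  intro z hz hdz
  obtain ⟨h, hh⟩ := X.exists_contraction hu
  have hcontract : (X.tensorD Y ∘ₗ outerProdMap h Y.sign + outerProdMap h Y.sign ∘ₗ X.tensorD Y) z =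
      (LinearMap.id : (X.Cell × Y.Cell →₀ R) →ₗ[R] _) z := by
    refine eq_of_mem_supported hz fun b hb => ?_
    rw [← outerProd_single, LinearMap.add_apply, LinearMap.comp_apply, LinearMap.comp_apply,
      outerProdMap_outerProd, tensorD_outerProd, tensorD_outerProd, map_add,
      outerProdMap_outerProd, outerProdMap_outerProd, Y.sign_sign, Y.d_sign,
      (hh b.1 (le_sup_left.trans hb)).2, map_sub, LinearMap.sub_apply, map_neg, LinearMap.id_apply]
    abel
  refine ⟨outerProdMap h Y.sign z, map_mem_of_mem_supported _ hz fun b hb => ?_, ?_⟩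
  · rw [← outerProd_single, outerProdMap_outerProd, sign_single, map_smul]
    refine Submodule.smul_mem _ _ (mem_supported_of_subset (outerProd_mem_supported
      (hh b.1 (le_sup_left.trans hb)).1 (single_one_mem_supported (Set.mem_singleton b.2))) ?_)
    rintro ⟨c, _⟩ ⟨hc, rfl⟩
    exact sup_le hc (le_sup_right.trans hb)
  · simpa [hdz] using hcontract

/-- The tensor product of two resolutions, whose labels are joins. -/
def tensor : LabeledResolution R L where
  Cell := X.Cell × Y.Cell
  dim c := X.dim c.1 + Y.dim c.2
  label c := X.label c.1 ⊔ Y.label c.2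
  d := X.tensorD Y
  d_d := X.tensorD_tensorD Y
  d_single b := mem_supported_of_subset (X.tensorD_single Y b) fun c hc =>
    ⟨by have := hc.1; omega, hc.2⟩
  base := (X.base, Y.base)
  dim_base := by rw [X.dim_base, Y.dim_base]
  label_base := by rw [X.label_base, Y.label_base, sup_idem]
  bot_lt_label := by
    rintro ⟨b, c⟩ hbc
    by_cases hb : b = X.base
    · have hc : c ≠ Y.base := fun hc => hbc (by rw [hb, hc])
      exact (Y.bot_lt_label c hc).trans_le le_sup_right
    · exact (X.bot_lt_label b hb).trans_le le_sup_left
  exact _ := X.exactOn_tensorD Y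

/-- The morphism `x ↦ x ⊗ base`. -/
def inclLeft : Hom X (X.tensor Y) where
  toLinearMap := outerProd.flip (single Y.base 1)
  isFiltered b := outerProd_single_mem_supported
    ⟨congrArg (X.dim b + ·) Y.dim_base, sup_le le_rfl (Y.label_base.le.trans bot_le)⟩
  d_map := X.tensorD_outerProd_base Y
  map_base := outerProd_single X.base Y.base

/-- The morphism `y ↦ base ⊗ y`. -/
def inclRight : Hom Y (X.tensor Y) where
  toLinearMap := outerProd (single X.base 1)
  isFiltered b := outerProd_single_mem_supported
    ⟨(congrArg (· + Y.dim b) X.dim_base).trans (add_comm _ _),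
      sup_le (X.label_base.le.trans bot_le) le_rfl⟩
  d_map := X.tensorD_base_outerProd Y
  map_base := outerProd_single _ _

theorem inclLeft_single (b : X.Cell) : X.inclLeft Y (single b 1) = single (b, Y.base) 1 :=
  outerProd_single b Y.base

end LabeledResolution

end TensorProducts

section Subadditivity

universe u v w

variable {𝕜 : Type u} [Field 𝕜] {L : Type v} [SemilatticeSup L] [OrderBot L]

namespace LabeledResolution

variable {F : LabeledResolution 𝕜 L}

theorem tensorD_mem_supported {S T : Set (F.Cell × F.Cell)} {x : F.Cell × F.Cell →₀ 𝕜}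
    (hx : x ∈ supported 𝕜 𝕜 S)
    (h : ∀ b ∈ S, ∀ c : F.Cell × F.Cell, (F.dim c.1 + 1 = F.dim b.1 ∧ F.dim c.2 = F.dim b.2 ∨
        F.dim c.1 = F.dim b.1 ∧ F.dim c.2 + 1 = F.dim b.2) →
      F.label c.1 ⊔ F.label c.2 ≤ F.label b.1 ⊔ F.label b.2 → c ∈ T) :
    F.tensorD F x ∈ supported 𝕜 𝕜 T :=
  map_mem_of_mem_supported _ hx fun b hb =>
    mem_supported_of_subset (F.tensorD_single F b) fun c hc => h b hb c hc.1 hc.2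

theorem exists_homotopy_outerProd_base (F : LabeledResolution 𝕜 L) :
    ∃ s : (F.Cell →₀ 𝕜) →ₗ[𝕜] (F.Cell × F.Cell →₀ 𝕜),
      (∀ b, s (single b 1) ∈ supported 𝕜 𝕜 {c : F.Cell × F.Cell |
        F.dim c.1 + F.dim c.2 = F.dim b + 1 ∧ F.label c.1 ⊔ F.label c.2 ≤ F.label b}) ∧
      ∀ x, F.tensorD F (s x) =
        outerProd x (single F.base 1) - outerProd (single F.base 1) x - s (F.d x) :=
  (F.inclLeft F).exists_homotopy (F.inclRight F)

-- A homotopy `s` from `b ↦ b ⊗ base` to `b ↦ base ⊗ b` is cut at bidegree `p`: the boundary of the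
-- part of `s b` beyond the cut differs from `b ⊗ base` by a vector in bidegree `p`, up to labels
-- below `label b`.
theorem IsMinimal.exists_tensorD_sub_mem_supported (hF : F.IsMinimal) {b : F.Cell} {p : ℕ}
    (hp : p ≤ F.dim b) :
    ∃ w ∈ supported 𝕜 𝕜 {c : F.Cell × F.Cell | F.label c.1 ⊔ F.label c.2 ≤ F.label b},
      F.tensorD F w - single (b, F.base) 1 ∈ supported 𝕜 𝕜 {c : F.Cell × F.Cell |
        (p ≤ F.dim c.1 ∧ F.dim c.1 + F.dim c.2 = F.dim b ∧
          F.label c.1 ⊔ F.label c.2 ≤ F.label b) ∧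
        (F.dim c.1 ≤ p ∨ F.label c.1 ⊔ F.label c.2 < F.label b)} := by
  classical
  obtain ⟨s, hs, hds⟩ := F.exists_homotopy_outerProd_base
  set w := (s (single b 1)).filter fun c : F.Cell × F.Cell => p < F.dim c.1
  set w' := (s (single b 1)).filter fun c : F.Cell × F.Cell => ¬ p < F.dim c.1
  have hw := filter_mem_supported (hs b) fun c : F.Cell × F.Cell => p < F.dim c.1
  have hw' := filter_mem_supported (hs b) fun c : F.Cell × F.Cell => ¬ p < F.dim c.1
  have hdsb : F.tensorD F w + F.tensorD F w' =
      single (b, F.base) 1 - single (F.base, b) 1 - s (F.d (single b 1)) := by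
    rw [← map_add, filter_add_filter_not, hds, outerProd_single, outerProd_single]
  have hge : F.tensorD F w - single (b, F.base) 1 ∈ supported 𝕜 𝕜 {c : F.Cell × F.Cell |
      p ≤ F.dim c.1 ∧ F.dim c.1 + F.dim c.2 = F.dim b ∧
        F.label c.1 ⊔ F.label c.2 ≤ F.label b} :=
    sub_mem
      (tensorD_mem_supported hw fun a ha c hdim hlabel =>
        ⟨by have := ha.2; omega, by have := ha.1.1; omega, hlabel.trans ha.1.2⟩)
      (single_one_mem_supported ⟨hp, by rw [F.dim_base, add_zero], by
        rw [F.label_base, sup_bot_eq]⟩)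
  have hle : F.tensorD F w - single (b, F.base) 1 ∈ supported 𝕜 𝕜 {c : F.Cell × F.Cell |
      F.dim c.1 ≤ p ∨ F.label c.1 ⊔ F.label c.2 < F.label b} := by
    have heq : F.tensorD F w - single (b, F.base) 1 =
        -single (F.base, b) (1 : 𝕜) - s (F.d (single b 1)) - F.tensorD F w' := by
      rw [eq_sub_of_add_eq hdsb]
      abel
    rw [heq]
    refine sub_mem (sub_mem (neg_mem (single_one_mem_supported (Or.inl ?_))) ?_) ?_
    · exact F.dim_base.trans_le p.zero_le
    · exact map_mem_of_mem_supported s (hF b) fun a ha =>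
        mem_supported_of_subset (hs a) fun _ hc => Or.inr (lt_of_le_of_lt hc.2 ha)
    · exact tensorD_mem_supported hw' fun a ha c hdim _ => Or.inl (by have := ha.2; omega)
  refine ⟨w, mem_supported_of_subset hw fun _ hc => hc.1.2, ?_⟩
  rw [mem_supported_iff_forall_ne] at hge hle ⊢
  exact fun c hc => ⟨hge c hc, hle c hc⟩

theorem IsMinimal.exists_sup_label_eq (hF : F.IsMinimal) {b : F.Cell} {p q : ℕ}
    (hb : F.dim b = p + q) :
    ∃ c c', F.dim c = p ∧ F.dim c' = q ∧ F.label c ⊔ F.label c' = F.label b := by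
  obtain ⟨w, hw, he⟩ := hF.exists_tensorD_sub_mem_supported (hb ▸ Nat.le_add_right p q)
  by_contra! h
  refine hF.d_sub_map_single_notMem (F.inclLeft F) b (w := w) hw ?_
  rw [inclLeft_single]
  refine mem_supported_of_subset he ?_
  rintro ⟨c, c'⟩ ⟨⟨hpc, hdim, hlabel⟩, hcp | hlt⟩
  · have hc : F.dim c = p := le_antisymm hcp hpc
    exact hlabel.lt_of_ne (h c c' hc (by dsimp only at hdim; omega))
  · exact hlt

theorem exists_sup_eq_of_not_acyclic (X : LabeledResolution.{u, v, w} 𝕜 L) [Finite X.Cell] {m : L}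
    (hm : ⊥ < m) {p q : ℕ} (h : ¬ X.Acyclic m (p + q + 1)) :
    ∃ x y, ⊥ < x ∧ ⊥ < y ∧ x ⊔ y = m ∧ ¬ X.Acyclic x p ∧ ¬ X.Acyclic y q := by
  obtain ⟨F, hF⟩ := X.exists_isMinimal
  have bot_lt {c : F.Cell} {n : ℕ} (hc : F.dim c = n + 1) : ⊥ < F.label c :=
    F.bot_lt_label c fun hbase => n.succ_ne_zero (hc.symm.trans (hbase ▸ F.dim_base))
  simp only [X.acyclic_iff F] at h ⊢
  obtain ⟨b, hb, rfl⟩ := (hF.not_acyclic_iff hm).1 h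
  obtain ⟨c, c', hc, hc', hsup⟩ :=
    hF.exists_sup_label_eq (b := b) (p := p + 1) (q := q + 1) (by omega)
  exact ⟨F.label c, F.label c', bot_lt hc, bot_lt hc', hsup, hF.not_acyclic_label hc,
    hF.not_acyclic_label hc'⟩

end LabeledResolution

end Subadditivity

section ListBoundaries

variable {R : Type*} [CommRing R] {α : Type*}

variable (R) in
/-- The simplicial boundary of a list: the alternating sum of the lists with one entry deleted. -/
def listBoundary : List α → (List α →₀ R)
  | [] => 0
  | a :: l => single l 1 - lmapDomain R R (List.cons a) (listBoundary l)

/-- The boundary operator on combinations of lists. -/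
def listD : (List α →₀ R) →ₗ[R] (List α →₀ R) :=
  linearCombination R (listBoundary R)

theorem listD_single_nil : listD (single ([] : List α) (1 : R)) = 0 := by
  simp [listD, listBoundary]

theorem listD_single_cons (a : α) (l : List α) : listD (single (a :: l) (1 : R)) =
    single l 1 - lmapDomain R R (List.cons a) (listD (single l 1)) := by
  simp [listD, listBoundary]

theorem listD_cons (a : α) (x : List α →₀ R) :
    listD (lmapDomain R R (List.cons a) x) = x - lmapDomain R R (List.cons a) (listD x) := by
  have h : listD ∘ₗ lmapDomain R R (List.cons a) =
      LinearMap.id - lmapDomain R R (List.cons a) ∘ₗ listD := linearMap_ext_single_one fun l => by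
    rw [LinearMap.comp_apply, lmapDomain_apply, mapDomain_single, listD_single_cons,
      LinearMap.sub_apply, LinearMap.id_apply, LinearMap.comp_apply]
  exact LinearMap.congr_fun h x

theorem listD_listD (x : List α →₀ R) : listD (listD x) = 0 := by
  have h : listD ∘ₗ listD = (0 : (List α →₀ R) →ₗ[R] (List α →₀ R)) :=
    linearMap_ext_single_one fun l => by
      rw [LinearMap.comp_apply, LinearMap.zero_apply]
      induction l with
      | nil => rw [listD_single_nil, map_zero]
      | cons a l ih =>
        rw [listD_single_cons, map_sub, listD_cons, ih, map_zero, sub_zero, sub_self]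
  exact LinearMap.congr_fun h x

theorem listD_single_mem_supported (l : List α) : listD (single l (1 : R)) ∈
    supported R R {l' : List α | l'.Sublist l ∧ l'.length + 1 = l.length} := by
  induction l with
  | nil =>
    rw [listD_single_nil]
    exact zero_mem _
  | cons a l ih =>
    rw [listD_single_cons]
    refine sub_mem (single_one_mem_supported ⟨List.sublist_cons_self a l, rfl⟩)
      (map_mem_of_mem_supported _ ih fun l' hl' => ?_)
    rw [lmapDomain_apply, mapDomain_single]
    exact single_one_mem_supported ⟨hl'.1.cons_cons a, congrArg Nat.succ hl'.2⟩

theorem listD_single_ofFn {n : ℕ} (c : Fin (n + 1) → α) :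
    listD (single (List.ofFn c) (1 : R)) =
      ∑ k : Fin (n + 1), (-1 : R) ^ (k : ℕ) • single (List.ofFn (c ∘ k.succAbove)) 1 := by
  induction n with
  | zero => simp [List.ofFn_succ, listD_single_cons, listD_single_nil]
  | succ n ih =>
    rw [List.ofFn_succ, listD_single_cons, ih, map_sum, sub_eq_add_neg,
      ← Finset.sum_neg_distrib, Fin.sum_univ_succ (n := n + 1)]
    congr 1
    · simp [Function.comp_def]
    · refine Finset.sum_congr rfl fun k _ => ?_
      rw [map_smul, lmapDomain_apply, mapDomain_single, ← neg_smul, List.ofFn_succ (n := n),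
        Fin.val_succ, pow_succ, mul_neg_one]
      simp [Function.comp_def]

open Classical in
/-- The cone with apex `u`: it puts `u` in front of the lists not containing `u` and kills the
others. -/
def listCone (u : α) : (List α →₀ R) →ₗ[R] (List α →₀ R) :=
  linearCombination R fun l => if u ∈ l then 0 else single (u :: l) 1

theorem listCone_single_of_mem {u : α} {l : List α} (h : u ∈ l) :
    listCone u (single l (1 : R)) = 0 := by
  rw [listCone, linearCombination_single, if_pos h, smul_zero]

theorem listCone_single_of_notMem {u : α} {l : List α} (h : u ∉ l) :
    listCone u (single l (1 : R)) = single (u :: l) 1 := by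
  rw [listCone, linearCombination_single, if_neg h, one_smul]

theorem listCone_cons (u : α) (x : List α →₀ R) :
    listCone u (lmapDomain R R (List.cons u) x) = 0 := by
  have h : listCone u ∘ₗ lmapDomain R R (List.cons u) = 0 :=
    linearMap_ext_single_one fun l => by
      rw [LinearMap.comp_apply, lmapDomain_apply, mapDomain_single,
        listCone_single_of_mem List.mem_cons_self, LinearMap.zero_apply]
  exact LinearMap.congr_fun h x

theorem listCone_listD_single_of_notMem {u : α} {l : List α} (h : u ∉ l) :
    listCone u (listD (single l (1 : R))) = lmapDomain R R (List.cons u) (listD (single l 1)) := by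
  refine eq_of_mem_supported (listD_single_mem_supported l) fun l' hl' => ?_
  rw [listCone_single_of_notMem fun hu => h (hl'.1.subset hu), lmapDomain_apply, mapDomain_single]

theorem listD_listCone_add_listCone_listD {u : α} {x : List α →₀ R}
    (hx : x ∈ supported R R {l | u ∉ l.tail}) :
    listD (listCone u x) + listCone u (listD x) = x := by
  suffices (listD ∘ₗ listCone u + listCone u ∘ₗ listD : (List α →₀ R) →ₗ[R] _) x =
    (LinearMap.id : (List α →₀ R) →ₗ[R] _) x from this
  refine eq_of_mem_supported hx fun l (hl : u ∉ l.tail) => ?_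
  rw [LinearMap.add_apply, LinearMap.comp_apply, LinearMap.comp_apply, LinearMap.id_apply]
  by_cases hu : u ∈ l
  · obtain ⟨t, rfl⟩ : ∃ t, l = u :: t := by
      cases l with
      | nil => exact absurd hu List.not_mem_nil
      | cons a t => exact ⟨t, by rw [(List.mem_cons.1 hu).resolve_right hl]⟩
    have ht : u ∉ t := hl
    rw [listCone_single_of_mem hu, map_zero, zero_add, listD_single_cons, map_sub, listCone_cons,
      sub_zero, listCone_single_of_notMem ht]
  · rw [listCone_single_of_notMem hu, listD_single_cons, listCone_listD_single_of_notMem hu,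
      sub_add_cancel]

end ListBoundaries

section ChainComplexes

universe u v

variable {R : Type u} [CommRing R] {L : Type v} [SemilatticeSup L] [OrderBot L]

/-- Strictly decreasing lists of elements greater than `⊥`: the simplices of the order complex of
`L` without its bottom element. -/
def IsPosChain (l : List L) : Prop :=
  l.Pairwise (· > ·) ∧ ∀ x ∈ l, ⊥ < x

namespace IsPosChain

theorem sublist {l l' : List L} (h : IsPosChain l) (hl : l'.Sublist l) : IsPosChain l' :=
  ⟨h.1.sublist hl, fun x hx => h.2 x (hl.subset hx)⟩

theorem sup_lt_iff {l : List L} (h : IsPosChain l) {m : L} (hm : ⊥ < m) :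
    (l : Multiset L).sup < m ↔ ∀ x ∈ l, x < m := by
  refine ⟨fun hlt x hx => (Multiset.le_sup (Multiset.mem_coe.2 hx)).trans_lt hlt, fun hlt => ?_⟩
  cases l with
  | nil => simpa using hm
  | cons a l =>
    refine lt_of_le_of_lt (Multiset.sup_le.2 fun x hx => ?_) (hlt a List.mem_cons_self)
    rcases List.mem_cons.1 (Multiset.mem_coe.1 hx) with rfl | hx
    · exact le_rfl
    · exact (List.rel_of_pairwise_cons h.1 hx).le

theorem notMem_tail {l : List L} (h : IsPosChain l) {m : L} (hm : (l : Multiset L).sup ≤ m) :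
    m ∉ l.tail := by
  cases l with
  | nil => exact List.not_mem_nil
  | cons a l =>
    intro hml
    have ham : a ≤ m := Multiset.sup_le.1 hm a (Multiset.mem_coe.2 List.mem_cons_self)
    exact (List.rel_of_pairwise_cons h.1 hml).not_ge ham

theorem cons {l : List L} (h : IsPosChain l) {m : L} (hm : ⊥ < m)
    (hlm : (l : Multiset L).sup ≤ m) (hml : m ∉ l) : IsPosChain (m :: l) := by
  refine ⟨List.pairwise_cons.2 ⟨fun x hx => ?_, h.1⟩, List.forall_mem_cons.2 ⟨hm, h.2⟩⟩
  exact (Multiset.sup_le.1 hlm x (Multiset.mem_coe.2 hx)).lt_of_ne (ne_of_mem_of_not_mem hx hml)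

end IsPosChain

theorem listD_single_mem_supported_isPosChain :
    ∀ l ∈ {l : List L | IsPosChain l},
      listD (single l (1 : R)) ∈ supported R R {l : List L | IsPosChain l} :=
  fun l h => mem_supported_of_subset (listD_single_mem_supported l) fun _ hl' =>
    IsPosChain.sublist h hl'.1

theorem exactOn_listD {m : L} (hm : ⊥ < m) : ExactOn (listD : (List L →₀ R) →ₗ[R] (List L →₀ R))
    ({l | (l : Multiset L).sup ≤ m} ∩ {l | IsPosChain l})
    ({l | (l : Multiset L).sup ≤ m} ∩ {l | IsPosChain l}) := by
  intro z hz hdz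
  refine ⟨listCone m z, map_mem_of_mem_supported _ hz fun l hl => ?_, ?_⟩
  · by_cases hml : m ∈ l
    · rw [listCone_single_of_mem hml]
      exact zero_mem _
    · rw [listCone_single_of_notMem hml]
      refine single_one_mem_supported ⟨?_, hl.2.cons hm hl.1 hml⟩
      rw [Set.mem_ofPred_eq, ← Multiset.cons_coe, Multiset.sup_cons]
      exact sup_le le_rfl hl.1
  · have h := listD_listCone_add_listCone_listD (mem_supported_of_subset hz fun l hl =>
      hl.2.notMem_tail hl.1)
    rwa [hdz, map_zero, add_zero] at h

variable (R L) in
/-- The chain complex of the order complex of `L` without its bottom element, as a resolution. The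
label of a chain is its largest element, or `⊥` for the empty chain. -/
def chainComplex : LabeledResolution.{u, v, v} R L where
  Cell := {l : List L | IsPosChain l}
  dim l := l.1.length
  label l := (l.1 : Multiset L).sup
  d := compress {l | IsPosChain l} listD
  d_d x := mapDomain_injective Subtype.val_injective <| by
    simp only [mapDomain_compress listD_single_mem_supported_isPosChain, listD_listD,
      mapDomain_zero]
  d_single l := compress_single_mem_supported (T := {l' : List L | l'.length + 1 = l.1.length ∧
    (l' : Multiset L).sup ≤ (l.1 : Multiset L).sup}) l <|
      mem_supported_of_subset (listD_single_mem_supported l.1) fun _ hl' =>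
        ⟨hl'.2, Multiset.sup_mono hl'.1.subset⟩
  base := ⟨[], List.Pairwise.nil, List.forall_mem_nil _⟩
  dim_base := rfl
  label_base := rfl
  bot_lt_label := by
    rintro ⟨l, hl⟩ hne
    obtain ⟨x, hx⟩ := List.exists_mem_of_ne_nil l fun h => hne (Subtype.ext h)
    exact (hl.2 x hx).trans_le (Multiset.le_sup (Multiset.mem_coe.2 hx))
  exact m hm := (exactOn_compress_iff listD_single_mem_supported_isPosChain
    {l : List L | (l : Multiset L).sup ≤ m} {l : List L | (l : Multiset L).sup ≤ m}).2
    (exactOn_listD hm)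

instance [Finite L] : Finite (chainComplex R L).Cell := by
  classical
  have := Fintype.ofFinite L
  have hNodup : {l : List L | l.Nodup}.Finite := Set.finite_coe_iff.1 <|
    inferInstanceAs (Finite {l : List L // l.Nodup})
  exact (hNodup.subset fun l hl => hl.1.imp fun h => h.ne').to_subtype

theorem acyclic_chainComplex_iff {m : L} {n : ℕ} : (chainComplex R L).Acyclic m n ↔
    ExactOn (listD : (List L →₀ R) →ₗ[R] (List L →₀ R))
      ({l | l.length = n ∧ (l : Multiset L).sup < m} ∩ {l | IsPosChain l})
      ({l | l.length = n + 1 ∧ (l : Multiset L).sup < m} ∩ {l | IsPosChain l}) :=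
  exactOn_compress_iff listD_single_mem_supported_isPosChain
    {l : List L | l.length = n ∧ (l : Multiset L).sup < m}
    {l : List L | l.length = n + 1 ∧ (l : Multiset L).sup < m}

end ChainComplexes

section OrderComplexHomology

variable {K} {P L : Type} [Preorder P]

section PartialOrder

variable [PartialOrder L]

/-- The embedding of the simplicial chains of the order complex of `P` into combinations of lists
induced by `g : P ↪o L`. -/
def orderChainsToLists (g : P ↪o L) (n : ℕ) : CGrp K P n →ₗ[K] (List L →₀ K) :=
  lmapDomain K K fun c => List.ofFn (g ∘ c.1)

theorem orderChainsToLists_single (g : P ↪o L) {n : ℕ} (c : OChain P n) :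
    orderChainsToLists g n (single c (1 : K)) = single (List.ofFn (g ∘ c.1)) 1 :=
  mapDomain_single

theorem ofFn_comp_injective (g : P ↪o L) (n : ℕ) :
    Function.Injective fun c : OChain P n => List.ofFn (g ∘ c.1) :=
  fun _ _ h => Subtype.ext (g.injective.comp_left (List.ofFn_injective h))

theorem orderChainsToLists_injective (g : P ↪o L) (n : ℕ) :
    Function.Injective (orderChainsToLists (K := K) g n) :=
  mapDomain_injective (ofFn_comp_injective g n)

theorem range_orderChainsToLists (g : P ↪o L) (n : ℕ) :
    LinearMap.range (orderChainsToLists (K := K) g n) =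
      supported K K (Set.range fun c : OChain P n => List.ofFn (g ∘ c.1)) := by
  rw [← Set.image_univ, ← lmapDomain_supported, supported_univ, Submodule.map_top]
  rfl

theorem listD_orderChainsToLists_zero (g : P ↪o L) (x : CGrp K P 0) :
    listD (orderChainsToLists g 0 x) = 0 := by
  have h : listD ∘ₗ orderChainsToLists g 0 = (0 : CGrp K P 0 →ₗ[K] _) :=
    linearMap_ext_single_one fun c => by
      rw [LinearMap.comp_apply, orderChainsToLists_single, List.ofFn_zero, listD_single_nil,
        LinearMap.zero_apply]
  exact LinearMap.congr_fun h x

theorem listD_orderChainsToLists_succ (g : P ↪o L) {n : ℕ} (x : CGrp K P (n + 1)) :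
    listD (orderChainsToLists g (n + 1) x) = orderChainsToLists g n (cbdry K P n x) := by
  have h : listD ∘ₗ orderChainsToLists g (n + 1) = orderChainsToLists g n ∘ₗ cbdry K P n :=
    linearMap_ext_single_one fun c => by
      have hbdry : cbdry K P n (single c 1) =
          ∑ k : Fin (n + 1), (-1 : K) ^ (k : ℕ) • single (odel P k c) 1 := by
        simp [cbdry, -smul_single]
      simp only [LinearMap.comp_apply, hbdry, map_sum, map_smul, orderChainsToLists_single]
      exact listD_single_ofFn _
  exact LinearMap.congr_fun h x

theorem mem_cyclesAt_iff (g : P ↪o L) {n : ℕ} {x : CGrp K P n} :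
    x ∈ cyclesAt K P n ↔ listD (orderChainsToLists g n x) = 0 := by
  cases n with
  | zero => exact iff_of_true trivial (listD_orderChainsToLists_zero g x)
  | succ n =>
    rw [listD_orderChainsToLists_succ, map_eq_zero_iff _ (orderChainsToLists_injective g n)]
    exact LinearMap.mem_ker

theorem boundariesIn_le_cyclesAt (g : P ↪o L) (n : ℕ) : boundariesIn K P n ≤ cyclesAt K P n := by
  rintro _ ⟨x, rfl⟩
  rw [mem_cyclesAt_iff g, ← listD_orderChainsToLists_succ, listD_listD]

end PartialOrder

variable [SemilatticeSup L] [OrderBot L] {m : L}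

theorem range_ofFn_comp {g : P ↪o L} (hg : Set.range g = Set.Ioo ⊥ m) (hm : ⊥ < m) (n : ℕ) :
    (Set.range fun c : OChain P n => List.ofFn (g ∘ c.1)) =
      {l : List L | l.length = n ∧ (l : Multiset L).sup < m} ∩ {l | IsPosChain l} := by
  ext l
  constructor
  · rintro ⟨c, rfl⟩
    have hc (k : Fin n) : g (c.1 k) ∈ Set.Ioo ⊥ m := hg ▸ Set.mem_range_self (c.1 k)
    have hchain : IsPosChain (List.ofFn (g ∘ c.1)) :=
      ⟨List.pairwise_ofFn.2 fun _ _ h => g.strictMono (c.2 h),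
        List.forall_mem_ofFn_iff.2 fun k => (hc k).1⟩
    exact ⟨⟨List.length_ofFn,
      (hchain.sup_lt_iff hm).2 (List.forall_mem_ofFn_iff.2 fun k => (hc k).2)⟩, hchain⟩
  · rintro ⟨⟨rfl, hlt⟩, hl⟩
    have hget (k : Fin l.length) : l.get k ∈ Set.range g := by
      rw [hg]
      exact ⟨hl.2 _ (l.get_mem k), (hl.sup_lt_iff hm).1 hlt _ (l.get_mem k)⟩
    choose p hp using hget
    have hgp : g ∘ p = l.get := funext hp
    refine ⟨⟨p, fun i j hij => ?_⟩, by dsimp only; rw [hgp, List.ofFn_get]⟩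
    rw [← g.lt_iff_lt, hp, hp]
    exact List.pairwise_iff_get.1 hl.1 i j hij

theorem rHomNontrivial_iff_not_acyclic {g : P ↪o L} (hg : Set.range g = Set.Ioo ⊥ m)
    (hm : ⊥ < m) {n : ℕ} : RHomNontrivial K P n ↔ ¬ (chainComplex K L).Acyclic m n := by
  rw [RHomNontrivial, not_iff_not, acyclic_chainComplex_iff, ← range_ofFn_comp hg hm,
    ← range_ofFn_comp hg hm]
  simp only [ExactOn, ← range_orderChainsToLists, LinearMap.mem_range, forall_exists_index,
    forall_apply_eq_imp_iff, exists_exists_eq_and, listD_orderChainsToLists_succ,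
    (orderChainsToLists_injective g n).eq_iff, ← mem_cyclesAt_iff]
  rfl

end OrderComplexHomology

section LcmLattice

variable {K} {nv : ℕ} {I : Ideal (PolyS K nv)}

theorem minGens_finite : (minGens K nv I).Finite :=
  WellQuasiOrderedLE.finite_of_isAntichain fun d hd _ hd' hne hle =>
    hd'.2 d (hle.lt_of_ne hne) hd.1

theorem lcmSet_finite : (lcmSet K nv I).Finite := by
  have hfin : {B : Finset (Fin nv → ℕ) | ↑B ⊆ minGens K nv I}.Finite :=
    minGens_finite.finite_subsets.preimage Finset.coe_injective.injOn
  refine (hfin.image fun B => B.sup id).subset ?_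
  rintro _ ⟨B, hB, rfl⟩
  exact Set.mem_image_of_mem _ hB

theorem bot_mem_lcmSet : ⊥ ∈ lcmSet K nv I :=
  ⟨∅, by simp, by simp⟩

theorem sup_mem_lcmSet ⦃x y : Fin nv → ℕ⦄ (hx : x ∈ lcmSet K nv I) (hy : y ∈ lcmSet K nv I) :
    x ⊔ y ∈ lcmSet K nv I := by
  classical
  obtain ⟨B, hB, rfl⟩ := hx
  obtain ⟨C, hC, rfl⟩ := hy
  exact ⟨B ∪ C, by rw [Finset.coe_union]; exact Set.union_subset hB hC, by rw [Finset.sup_union]⟩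

instance : SemilatticeSup (lcmSet K nv I) := Subtype.semilatticeSup sup_mem_lcmSet

instance : OrderBot (lcmSet K nv I) := Subtype.orderBot bot_mem_lcmSet

instance : Finite (lcmSet K nv I) := lcmSet_finite.to_subtype

variable (I) in
/-- The inclusion of an open interval into the LCM-lattice. -/
def openIntEmbedding (m : Fin nv → ℕ) : openInt K nv I m ↪o lcmSet K nv I where
  toFun p := ⟨p.1, p.2.1⟩
  inj' _ _ h := Subtype.ext (Subtype.mk.inj h)
  map_rel_iff' := Iff.rfl

theorem range_openIntEmbedding (m : lcmSet K nv I) :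
    Set.range (openIntEmbedding I m.1) = Set.Ioo ⊥ m := by
  ext x
  constructor
  · rintro ⟨p, rfl⟩
    exact p.2.2
  · exact fun hx => ⟨⟨x.1, x.2, hx⟩, rfl⟩

theorem mem_lcmSet_of_multiBetti_succ_ne_zero {i : ℕ} {m : Fin nv → ℕ}
    (h : multiBetti K nv I (i + 1) m ≠ 0) : m ∈ lcmSet K nv I ∧ m ≠ 0 := by
  by_contra hm
  exact h (by rw [multiBetti, if_neg (Nat.succ_ne_zero i), if_neg hm])

theorem multiBetti_succ_ne_zero_iff {i : ℕ} {m : lcmSet K nv I} (hm : ⊥ < m) :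
    multiBetti K nv I (i + 1) m ≠ 0 ↔ ¬ (chainComplex K (lcmSet K nv I)).Acyclic m i := by
  have hm₀ : m.1 ≠ 0 := fun h => hm.ne' (Subtype.ext h)
  have : Finite (openInt K nv I m) := Finite.of_injective _ (openIntEmbedding I m.1).injective
  have : Finite (OChain (openInt K nv I m) i) := Subtype.finite
  have hle := boundariesIn_le_cyclesAt (K := K) (openIntEmbedding I m.1) i
  rw [← rHomNontrivial_iff_not_acyclic (range_openIntEmbedding m) hm, multiBetti,
    if_neg (Nat.succ_ne_zero i), if_pos ⟨m.2, hm₀⟩, Nat.add_sub_cancel, Nat.sub_ne_zero_iff_lt]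
  exact ⟨fun h h' => h.not_ge (Submodule.finrank_mono h'), fun h =>
    Submodule.finrank_lt_finrank_of_lt (lt_of_le_not_ge hle h)⟩

theorem exists_sup_eq_of_multiBetti_ne_zero {a b : ℕ} {m : Fin nv → ℕ}
    (h : multiBetti K nv I (a + 1 + (b + 1)) m ≠ 0) :
    ∃ x y, x ⊔ y = m ∧ multiBetti K nv I (a + 1) x ≠ 0 ∧ multiBetti K nv I (b + 1) y ≠ 0 := by
  have hab : a + 1 + (b + 1) = a + b + 1 + 1 := by omega
  rw [hab] at h
  obtain ⟨hm, hm₀⟩ := mem_lcmSet_of_multiBetti_succ_ne_zero h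
  lift m to lcmSet K nv I using hm
  have hm_pos : ⊥ < m := bot_lt_iff_ne_bot.2 fun hbot => hm₀ (congrArg Subtype.val hbot)
  obtain ⟨x, y, hx_pos, hy_pos, rfl, hx, hy⟩ := (chainComplex K _).exists_sup_eq_of_not_acyclic
    hm_pos ((multiBetti_succ_ne_zero_iff hm_pos).1 h)
  exact ⟨x, y, rfl, (multiBetti_succ_ne_zero_iff hx_pos).2 hx,
    (multiBetti_succ_ne_zero_iff hy_pos).2 hy⟩

theorem betti_degTot_ne_zero {i : ℕ} {m : Fin nv → ℕ} (h : multiBetti K nv I (i + 1) m ≠ 0) :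
    betti K nv I (i + 1) (degTot nv m) ≠ 0 := by
  have hfin : ({m' | degTot nv m' = degTot nv m} ∩
      Function.support (multiBetti K nv I (i + 1))).Finite :=
    lcmSet_finite.subset fun _ hm' => (mem_lcmSet_of_multiBetti_succ_ne_zero hm'.2).1
  rw [betti, finsum_mem_eq_sum _ hfin, ne_eq, Finset.sum_eq_zero_iff]
  exact fun h₀ => h (h₀ m (hfin.mem_toFinset.2 ⟨rfl, h⟩))

theorem exists_multiBetti_ne_zero {i j : ℕ} (h : betti K nv I i j ≠ 0) :
    ∃ m, degTot nv m = j ∧ multiBetti K nv I i m ≠ 0 :=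
  exists_ne_zero_of_finsum_mem_ne_zero h

theorem degTot_le_tshift {i : ℕ} {m : Fin nv → ℕ} (h : multiBetti K nv I (i + 1) m ≠ 0) :
    degTot nv m ≤ tshift K nv I (i + 1) := by
  refine le_csSup ((lcmSet_finite (I := I)).image (degTot nv) |>.bddAbove.mono fun j hj => ?_)
    (betti_degTot_ne_zero h)
  obtain ⟨m', rfl, hm'⟩ := exists_multiBetti_ne_zero hj
  exact ⟨m', (mem_lcmSet_of_multiBetti_succ_ne_zero hm').1, rfl⟩

theorem degTot_sup_le (x y : Fin nv → ℕ) :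
    degTot nv (x ⊔ y) ≤ degTot nv x + degTot nv y := by
  rw [degTot, degTot, degTot, ← Finset.sum_add_distrib]
  exact Finset.sum_le_sum fun r _ => sup_le (Nat.le_add_right _ _) (Nat.le_add_left _ _)

end LcmLattice

/-- **subadditivity of maximal shifts.**  Let `I` be a monomial ideal in
`S = K[x₁, …, xₙ]`.  Then for all `i₁, i₂ ≥ 0` one has
`t_{i₁+i₂}(S/I) ≤ t_{i₁}(S/I) + t_{i₂}(S/I)`. -/
theorem maximal_shifts_subadditive (nv : ℕ) (I : Ideal (PolyS K nv))
    (hI : IsMonomialIdeal K nv I) (i₁ i₂ : ℕ) :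
    tshift K nv I (i₁ + i₂) ≤ tshift K nv I i₁ + tshift K nv I i₂ := by
  rcases i₁ with _ | a
  · rw [Nat.zero_add]
    exact Nat.le_add_left _ _
  rcases i₂ with _ | b
  · exact Nat.le_add_right _ _
  refine csSup_le' fun j hj => ?_
  obtain ⟨m, rfl, hm⟩ := exists_multiBetti_ne_zero hj
  obtain ⟨x, y, rfl, hx, hy⟩ := exists_sup_eq_of_multiBetti_ne_zero hm
  exact (degTot_sup_le x y).trans (add_le_add (degTot_le_tshift hx) (degTot_le_tshift hy))

end
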